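/- Let p > 1, μ = 1 or μ = −1, and let u ∈ C²([0,T]; ℓ²(ℤ^d)) satisfy the discrete semilinear wave equation ∂_t² u(x,t) − Δu(x,t) = μ|u(x,t)|^{p−1}u(x,t) for all (x,t) ∈ ℤ^d × [0,T]. Then the energy E(t) := (1/2) Σ_{k∈ℤ^d} ( |∂_t u(k,t)|² + Σ_{j=1}^d |∂_j u(k,t)|² − 2μ|u(k,t)|^{p+1}/(p+1) ) is conserved: E(t) = E(0) for all t ∈ [0,T]. -/

import Mathlib

/-!
On the real Hilbert space `ℓ²(ℤ^d)` the equation is Newton's equation `u'' = -∇Φ(u)` for the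
potential `Φ(f) = ½ ∑ⱼ ‖∂ⱼf‖² - μ/(p+1) ∑ₘ |f(m)|^{p+1}`, and `½ ‖u'‖² + Φ(u)` is the energy.

The quadratic part of `Φ` has gradient `∑ⱼ ∂ⱼ* ∂ⱼ f`. This is `-Δf` because the numbers
`-4/(π(4a²-1))` are the Fourier coefficients of `|e^{2πix} - 1|`, whose square is
`2 - e^{2πix} - e^{-2πix}`; by Parseval the kernel of `∂ⱼ` therefore has autocorrelation
`2δ₀ - δ_{eⱼ} - δ_{-eⱼ}`. The other part is differentiable because it is convex and its subgradient
`f ↦ (p+1) |f|^{p-1} f` is locally Lipschitz on `ℓ²`.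
-/

open scoped BigOperators ENNReal NNReal
open MeasureTheory Filter

noncomputable section

/-- Kernel `φⱼ` of the discrete partial derivative on `ℤ^d`:
`φⱼ(m) = -4i/(π(4a²-1))` if `m = a·eⱼ`, and `0` otherwise. -/
def phi (d : ℕ) (j : Fin d) (m : Fin d → ℤ) : ℂ :=
  if ∀ i, i ≠ j → m i = 0 then
    (-4 * Complex.I) / ((Real.pi : ℂ) * (4 * (m j : ℂ) ^ 2 - 1))
  else 0

/-- Discrete convolution on `ℤ^d`. -/
def dconv {d : ℕ} (u v : (Fin d → ℤ) → ℂ) (k : Fin d → ℤ) : ℂ :=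
  ∑' m, u m * v (k - m)

/-- Discrete partial derivative `∂ⱼ u = u ∗ φⱼ`. -/
def pd {d : ℕ} (j : Fin d) (u : (Fin d → ℤ) → ℂ) : (Fin d → ℤ) → ℂ :=
  dconv u (phi d j)

/-- Japanese bracket `⟨m⟩ = (1+|m|²)^{1/2}`. -/
def jap {d : ℕ} (m : Fin d → ℤ) : ℝ :=
  Real.sqrt (1 + ∑ i, ((m i : ℝ)) ^ 2)

open scoped Classical in
/-- `ℓ^p` norm on `ℤ^d` (valued in `ℝ≥0∞`), `1 ≤ p ≤ ∞`. -/
def lpn {d : ℕ} (p : ℝ≥0∞) (f : (Fin d → ℤ) → ℂ) : ℝ≥0∞ :=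
  if p = ⊤ then ⨆ m, (‖f m‖₊ : ℝ≥0∞)
  else (∑' m, (‖f m‖₊ : ℝ≥0∞) ^ p.toReal) ^ (1 / p.toReal)

/-- Weighted `ℓ^{2,k}` norm: the `ℓ²` norm of `m ↦ ⟨m⟩^k f(m)`. -/
def w2 {d : ℕ} (k : ℕ) (f : (Fin d → ℤ) → ℂ) : ℝ≥0∞ :=
  lpn 2 (fun m => ((jap m ^ k : ℝ) : ℂ) * f m)

/-- Discrete Laplacian on `ℤ^d`. -/
def lap {d : ℕ} (u : (Fin d → ℤ) → ℂ) (x : Fin d → ℤ) : ℂ :=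
  ∑ j, (u (x + Pi.single j 1) + u (x - Pi.single j 1) - 2 * u x)

/-- Continuity of a curve `t ↦ f(·,t)` into `ℓ^{2,k}(ℤ^d)` on a set `S` of times. -/
def ContW {d : ℕ} (k : ℕ) (S : Set ℝ) (f : ℝ → (Fin d → ℤ) → ℂ) : Prop :=
  ∀ t ∈ S, Tendsto (fun s => w2 k (fun m => f s m - f t m))
    (nhdsWithin t S) (nhds (0 : ℝ≥0∞))

/-- `f'` is the derivative (in the `ℓ^{2,k}(ℤ^d)` norm) of the curve `t ↦ f(·,t)` on `S`. -/
def DerivW {d : ℕ} (k : ℕ) (S : Set ℝ) (f f' : ℝ → (Fin d → ℤ) → ℂ) : Prop :=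
  ∀ t ∈ S, Tendsto
    (fun s => w2 k (fun m => (s - t)⁻¹ • (f s m - f t m) - f' t m))
    (nhdsWithin t (S \ {t})) (nhds (0 : ℝ≥0∞))

/-- `u ∈ C²(S; ℓ^{2,k}(ℤ^d))`, with first and second time derivatives `u1`, `u2`. -/
structure IsC2 {d : ℕ} (k : ℕ) (S : Set ℝ) (u u1 u2 : ℝ → (Fin d → ℤ) → ℂ) : Prop where
  mem0 : ∀ t ∈ S, w2 k (u t) < ⊤
  mem1 : ∀ t ∈ S, w2 k (u1 t) < ⊤
  mem2 : ∀ t ∈ S, w2 k (u2 t) < ⊤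
  cont0 : ContW k S u
  cont1 : ContW k S u1
  cont2 : ContW k S u2
  hder1 : DerivW k S u u1
  hder2 : DerivW k S u1 u2

open scoped lp InnerProductSpace Topology

section SquareSummable

variable {ι E : Type*} [NormedAddCommGroup E]

lemma hasSum_norm_sq (f : ℓ²(ι, E)) :
    HasSum (fun i => ‖f i‖ ^ 2) (‖f‖ ^ 2) := by
  simpa using lp.hasSum_norm (by norm_num) f

/-- The element of `ℓ²` with values `f`, or `0` when `f` is not square-summable. -/
def toL2 (f : ι → E) : ℓ²(ι, E) :=
  open scoped Classical in if h : Memℓp f 2 then ⟨f, h⟩ else 0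

lemma coe_toL2 {f : ι → E} (h : Memℓp f 2) :
    ⇑(toL2 f) = f := by
  simp [toL2, h]

end SquareSummable

section Kernel

open scoped ComplexConjugate in
theorem hasSum_conj_fourierCoeff_mul_fourierCoeff_add {T : ℝ} [Fact (0 < T)]
    (f : C(AddCircle T, ℂ)) (c : ℤ) :
    HasSum (fun a => conj (fourierCoeff f a) * fourierCoeff f (a + c))
      (fourierCoeff (star f * f) c) := by
  have hshift (a : ℤ) : fourierCoeff ⇑(fourier (-c) * f : C(AddCircle T, ℂ)) a =
      fourierCoeff f (a + c) := by
    refine integral_congr_ae (.of_forall fun x => ?_)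
    simp only [ContinuousMap.mul_apply, smul_eq_mul, neg_add, fourier_add, mul_assoc]
  have hparseval := fourierBasis.hasSum_inner_mul_inner
    (ContinuousMap.toLp 2 AddCircle.haarAddCircle ℂ f)
    (ContinuousMap.toLp 2 AddCircle.haarAddCircle ℂ (fourier (-c) * f))
  convert! hparseval using 1
  · ext a
    rw [← inner_conj_symm, ← HilbertBasis.repr_apply_apply, ← HilbertBasis.repr_apply_apply,
      fourierBasis_repr, fourierBasis_repr, fourierCoeff_toLp, fourierCoeff_toLp, hshift]
  · rw [ContinuousMap.inner_toLp]
    refine integral_congr_ae (.of_forall fun x => ?_)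
    simp only [ContinuousMap.mul_apply, ContinuousMap.star_apply, smul_eq_mul, RCLike.star_def]
    ring

/-- The function `x ↦ |e^{2πix} - 1|` on the circle: up to sign, the Fourier multiplier of `i ∂ⱼ` in
the `j`-th frequency. -/
def absFourierSubOne : C(AddCircle (1 : ℝ), ℂ) where
  toFun x := (‖fourier 1 x - 1‖ : ℂ)

lemma star_absFourierSubOne_mul_self :
    star absFourierSubOne * absFourierSubOne = (2 : ℂ) • fourier 0 - fourier 1 - fourier (-1) := by
  ext x
  have hunit : fourier 1 x * fourier (-1) x = 1 := by rw [← fourier_add]; simp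
  simp only [absFourierSubOne, ContinuousMap.mul_apply, ContinuousMap.star_apply,
    ContinuousMap.coe_mk, ContinuousMap.sub_apply, ContinuousMap.smul_apply, RCLike.star_def,
    Complex.conj_ofReal, fourier_zero, smul_eq_mul]
  rw [← sq, ← Complex.conj_mul', map_sub, map_one, ← fourier_neg]
  linear_combination hunit

lemma absFourierSubOne_coe {x : ℝ} (hx : x ∈ Set.Icc (0 : ℝ) 1) :
    absFourierSubOne x = 2 * Complex.sin (Real.pi * x) := by
  have hsin : 0 ≤ Real.sin (Real.pi * x) := Real.sin_nonneg_of_nonneg_of_le_pi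
    (by have := hx.1; positivity) (mul_le_of_le_one_right Real.pi_pos.le hx.2)
  have hnorm : ‖fourier 1 (x : AddCircle (1 : ℝ)) - 1‖ = 2 * Real.sin (Real.pi * x) := by
    rw [fourier_coe_apply, show 2 * Real.pi * Complex.I * (1 : ℤ) * x / (1 : ℝ) =
      Complex.I * ((2 * (Real.pi * x) : ℝ) : ℂ) by push_cast; ring,
      Complex.norm_exp_I_mul_ofReal_sub_one, mul_div_cancel_left₀ _ two_ne_zero,
      Real.norm_of_nonneg (by positivity)]
  rw [absFourierSubOne, ContinuousMap.coe_mk, hnorm]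
  push_cast
  rfl

/-- The real profile of the kernel of `∂ⱼ`: `φⱼ(a eⱼ) = -i ψ(a)`. -/
def psi (a : ℤ) : ℝ := 4 / (Real.pi * (4 * (a : ℝ) ^ 2 - 1))

lemma integral_exp_neg_odd_mul_pi_I (b : ℤ) :
    ∫ x in (0 : ℝ)..1, Complex.exp (-((2 * b + 1) * Real.pi * Complex.I) * x) =
      2 / ((2 * b + 1) * Real.pi * Complex.I) := by
  have hodd : 2 * (b : ℂ) + 1 ≠ 0 := by exact_mod_cast (by lia : 2 * b + 1 ≠ 0)
  have hexp : Complex.exp (-((2 * b + 1) * Real.pi * Complex.I)) = -1 := by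
    rw [show -((2 * b + 1) * Real.pi * Complex.I) =
      ((-b - 1 : ℤ) : ℂ) * (2 * Real.pi * Complex.I) + Real.pi * Complex.I by push_cast; ring,
      Complex.exp_add, Complex.exp_int_mul_two_pi_mul_I, Complex.exp_pi_mul_I, one_mul]
  rw [integral_exp_mul_complex (neg_ne_zero.2
    (mul_ne_zero (mul_ne_zero hodd (Complex.ofReal_ne_zero.2 Real.pi_ne_zero)) Complex.I_ne_zero))]
  simp only [Complex.ofReal_one, Complex.ofReal_zero, mul_one, mul_zero, hexp, Complex.exp_zero]
  rw [div_neg, ← neg_div]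
  norm_num

lemma fourierCoeff_absFourierSubOne (a : ℤ) : fourierCoeff absFourierSubOne a = -(psi a : ℂ) := by
  have hpi : (Real.pi : ℂ) ≠ 0 := Complex.ofReal_ne_zero.2 Real.pi_ne_zero
  have hplus : 2 * (a : ℂ) + 1 ≠ 0 := by exact_mod_cast (by lia : 2 * a + 1 ≠ 0)
  have hminus : 2 * (a : ℂ) - 1 ≠ 0 := by exact_mod_cast (by lia : 2 * a - 1 ≠ 0)
  have hsplit : ∀ x ∈ Set.uIcc (0 : ℝ) 1,
      fourier (-a) (x : AddCircle (1 : ℝ)) • absFourierSubOne x =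
        Complex.I * (Complex.exp (-((2 * a + 1) * Real.pi * Complex.I) * x) -
          Complex.exp (-((2 * (a - 1 : ℤ) + 1) * Real.pi * Complex.I) * x)) := by
    intro x hx
    rw [absFourierSubOne_coe (by rwa [Set.uIcc_of_le zero_le_one] at hx), fourier_coe_apply,
      Complex.sin, smul_eq_mul, mul_div_cancel₀ _ two_ne_zero,
      show -((2 * a + 1) * Real.pi * Complex.I) * x =
        2 * Real.pi * Complex.I * (-a : ℤ) * x / (1 : ℝ) + -(Real.pi * x) * Complex.I by
          push_cast; ring,
      show -((2 * (a - 1 : ℤ) + 1) * Real.pi * Complex.I) * x =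
        2 * Real.pi * Complex.I * (-a : ℤ) * x / (1 : ℝ) + Real.pi * x * Complex.I by
          push_cast; ring,
      Complex.exp_add, Complex.exp_add]
    ring
  rw [fourierCoeff_eq_intervalIntegral _ _ 0, zero_add, intervalIntegral.integral_congr hsplit,
    intervalIntegral.integral_const_mul, intervalIntegral.integral_sub
      (Continuous.intervalIntegrable (by fun_prop) _ _)
      (Continuous.intervalIntegrable (by fun_prop) _ _), integral_exp_neg_odd_mul_pi_I,
    integral_exp_neg_odd_mul_pi_I, psi]
  push_cast
  rw [show (4 * (a : ℂ) ^ 2 - 1) = (2 * a + 1) * (2 * a - 1) by ring,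
    show 2 * ((a : ℂ) - 1) + 1 = 2 * a - 1 by ring]
  have hI := Complex.I_ne_zero
  simp only [div_one, one_smul]
  field_simp
  ring

lemma summable_psi : Summable psi := by
  have hdom := (Real.summable_one_div_int_pow (p := 2)).2 one_lt_two
  refine Summable.of_norm_bounded_eventually (hdom.mul_left (4 / Real.pi)) ?_
  filter_upwards [(Set.finite_singleton (0 : ℤ)).compl_mem_cofinite] with a ha
  have hone : (1 : ℝ) ≤ (a : ℝ) ^ 2 := by
    exact_mod_cast Int.add_one_le_iff.2 (sq_pos_of_ne_zero ha)
  have hsq : (a : ℝ) ^ 2 ≤ 4 * (a : ℝ) ^ 2 - 1 := by linarith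
  have hpos : 0 < 4 * (a : ℝ) ^ 2 - 1 := by linarith
  rw [psi, Real.norm_of_nonneg (by positivity), div_mul_div_comm, mul_one]
  gcongr

lemma hasSum_psi_mul_psi_add (c : ℤ) :
    HasSum (fun a => psi a * psi (a + c))
      ((Pi.single 0 2 - Pi.single 1 1 - Pi.single (-1) 1 : ℤ → ℝ) c) := by
  have hcoeff : fourierCoeff (star absFourierSubOne * absFourierSubOne : C(AddCircle (1 : ℝ), ℂ)) c
      = ((Pi.single 0 2 - Pi.single 1 1 - Pi.single (-1) 1 : ℤ → ℝ) c : ℝ) := by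
    have hsingle (n : ℤ) : fourierCoeff (fourier n : C(AddCircle (1 : ℝ), ℂ)) c =
        ((Pi.single n 1 : ℤ → ℝ) c : ℝ) := by
      rw [fourierCoeff_fourier]
      simp only [Pi.single_apply, apply_ite Complex.ofReal, Complex.ofReal_one, Complex.ofReal_zero]
    rw [star_absFourierSubOne_mul_self, ← fourierCoeff_toLp, ← fourierBasis_repr]
    simp only [map_sub, map_smul, lp.coeFn_sub, lp.coeFn_smul, Pi.sub_apply, Pi.smul_apply,
      fourierBasis_repr, fourierCoeff_toLp, hsingle]
    simp only [Pi.single_apply, smul_eq_mul]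
    split_ifs <;> norm_num
  rw [← Complex.hasSum_ofReal, ← hcoeff]
  convert hasSum_conj_fourierCoeff_mul_fourierCoeff_add absFourierSubOne c using 2 with a
  simp [fourierCoeff_absFourierSubOne]

end Kernel

section Convolution

variable {𝕜 A G : Type*} [RCLike 𝕜] [NormedRing A] [StarRing A] [CStarRing A] [AddGroup G]

lemma norm_le_one_of_star_mul_eq_sub {U : G → A} (hU : ∀ a b, star (U a) * U b = U (b - a))
    (a : G) : ‖U a‖ ≤ 1 := by
  have hsq (b : G) : ‖U b‖ * ‖U b‖ = ‖U 0‖ := by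
    rw [← CStarRing.norm_star_mul_self, hU, sub_self]
  have hzero : ‖U 0‖ ≤ 1 := by nlinarith [hsq 0]
  nlinarith [hsq a]

variable [NormedAlgebra 𝕜 A]

lemma summable_norm_smul_of_star_mul_eq_sub {w : G → 𝕜} {U : G → A} (hw : Summable w)
    (hU : ∀ a b, star (U a) * U b = U (b - a)) : Summable fun a => ‖w a • U a‖ :=
  hw.norm.of_nonneg_of_le (fun _ => norm_nonneg _) fun a => (norm_smul_le _ _).trans
    (mul_le_of_le_one_right (norm_nonneg _) (norm_le_one_of_star_mul_eq_sub hU a))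

lemma hasSum_star_tsum_mul_tsum [CompleteSpace A] [StarModule 𝕜 A] {w r : G → 𝕜} {U : G → A}
    (hw : Summable w) (hU : ∀ a b, star (U a) * U b = U (b - a))
    (hr : ∀ c, HasSum (fun a => star (w a) * w (c + a)) (r c)) :
    HasSum (fun c => r c • U c) (star (∑' a, w a • U a) * ∑' a, w a • U a) := by
  have hnorm := summable_norm_smul_of_star_mul_eq_sub hw hU
  have hstar : Summable fun a => ‖star (w a • U a)‖ := by simpa only [norm_star] using hnorm
  have hprod : HasSum (fun x : G × G => star (w x.1 • U x.1) * (w x.2 • U x.2))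
      (star (∑' a, w a • U a) * ∑' a, w a • U a) := by
    rw [tsum_star, tsum_mul_tsum_of_summable_norm hstar hnorm]
    exact (summable_mul_of_summable_norm hstar hnorm).hasSum
  let e : G × G ≃ G × G :=
    (Equiv.prodComm G G).trans (Equiv.prodShear (Equiv.refl G) Equiv.addRight)
  have hterm (c a : G) : star (w a • U a) * (w (c + a) • U (c + a)) =
      (star (w a) * w (c + a)) • U c := by
    rw [star_smul, smul_mul_smul_comm, hU, add_sub_cancel_right]
  have hshear : HasSum (fun x : G × G => star (w x.2 • U x.2) * (w (x.1 + x.2) • U (x.1 + x.2)))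
      (star (∑' a, w a • U a) * ∑' a, w a • U a) := e.hasSum_iff.2 hprod
  refine hshear.prod_fiberwise fun c => ?_
  simpa only [hterm] using (hr c).smul_const (U c)

end Convolution

section Translation

variable {G E : Type*} [AddCommGroup G] [NormedAddCommGroup E] [InnerProductSpace ℝ E]

/-- Translation by `a` on `ℓ²(G, E)`: `(translation a f) m = f (m - a)`. -/
def translation (a : G) : ℓ²(G, E) →L[ℝ] ℓ²(G, E) := LinearIsometry.toContinuousLinearMap
  { toFun f := ⟨fun m => f (m - a), (memℓp_gen_iff (by norm_num)).2
      ((Equiv.subRight a).summable_iff.2 ((lp.memℓp f).summable (by norm_num)))⟩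
    map_add' _ _ := rfl
    map_smul' _ _ := rfl
    norm_map' f := by
      simp only [lp.norm_eq_tsum_rpow (p := 2) (by norm_num)]
      rw [← (Equiv.subRight a).tsum_eq (fun m => ‖f m‖ ^ (2 : ℝ≥0∞).toReal)]
      rfl }

@[simp] lemma translation_apply (a : G) (f : ℓ²(G, E)) (m : G) : translation a f m = f (m - a) :=
  rfl

@[simp] lemma translation_zero : translation (0 : G) = (1 : ℓ²(G, E) →L[ℝ] ℓ²(G, E)) := by
  ext f m
  simp

lemma star_translation_mul_translation [CompleteSpace E] (a b : G) :
    star (translation a : ℓ²(G, E) →L[ℝ] ℓ²(G, E)) * translation b = translation (b - a) := by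
  refine ContinuousLinearMap.ext fun f => ext_inner_right ℝ fun g => ?_
  rw [mul_apply_eq_comp, ContinuousLinearMap.star_eq_adjoint,
    ContinuousLinearMap.adjoint_inner_left, lp.inner_eq_tsum, lp.inner_eq_tsum,
    ← (Equiv.addRight a).tsum_eq]
  simp [sub_sub_eq_add_sub]

end Translation

section LatticeDerivative

variable {G E : Type*} [AddCommGroup G] [NormedAddCommGroup E] [InnerProductSpace ℝ E]

/-- The convolution operator `∑ₐ ψ(a) τ_{a e}` on `ℓ²(G, E)`. On `G = ℤ^d` with `e = eⱼ` it is
`i ∂ⱼ`; as an operator it equals `-|τ_e - 1|`. -/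
def latticeDeriv (e : G) : ℓ²(G, E) →L[ℝ] ℓ²(G, E) := ∑' a : ℤ, psi a • translation (a • e)

variable [CompleteSpace E]

lemma star_translation_zsmul_mul (e : G) (a b : ℤ) :
    star (translation (a • e) : ℓ²(G, E) →L[ℝ] ℓ²(G, E)) * translation (b • e) =
      translation ((b - a) • e) := by
  rw [star_translation_mul_translation, sub_smul]

lemma summable_psi_smul_translation (e : G) :
    Summable fun a : ℤ => psi a • (translation (a • e) : ℓ²(G, E) →L[ℝ] ℓ²(G, E)) :=
  (summable_norm_smul_of_star_mul_eq_sub (A := ℓ²(G, E) →L[ℝ] ℓ²(G, E)) summable_psi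
    (star_translation_zsmul_mul e)).of_norm

lemma hasSum_latticeDeriv_apply (e : G) (f : ℓ²(G, E)) (k : G) :
    HasSum (fun a : ℤ => psi a • f (k - a • e)) (latticeDeriv e f k) :=
  (summable_psi_smul_translation e).hasSum.mapL
    (lp.evalCLM ℝ (fun _ : G => E) 2 k ∘L ContinuousLinearMap.apply ℝ _ f)

lemma star_latticeDeriv_mul_self (e : G) :
    star (latticeDeriv e : ℓ²(G, E) →L[ℝ] ℓ²(G, E)) * latticeDeriv e =
      (2 : ℝ) • 1 - translation e - translation (-e) := by
  have hsum := hasSum_star_tsum_mul_tsum (A := ℓ²(G, E) →L[ℝ] ℓ²(G, E)) summable_psi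
    (star_translation_zsmul_mul e) fun c => by
      simpa only [star_trivial, add_comm c] using hasSum_psi_mul_psi_add c
  refine (hsum.unique (hasSum_sum_of_ne_finset_zero (s := {0, 1, -1}) fun c hc => ?_)).trans ?_
  · simp_all [Pi.single_apply]
  · simp [Pi.single_apply, sub_eq_add_neg, add_assoc]

end LatticeDerivative

section Lattice

variable {d : ℕ}

lemma phi_single (j : Fin d) (a : ℤ) : phi d j (Pi.single j a) = -Complex.I * psi a := by
  have haxis : ∀ i, i ≠ j → (Pi.single j a : Fin d → ℤ) i = 0 :=
    fun i hi => Pi.single_eq_of_ne hi _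
  rw [phi, if_pos haxis, Pi.single_eq_same, psi]
  push_cast
  ring

lemma support_phi_subset (j : Fin d) :
    Function.support (phi d j) ⊆ Set.range fun a : ℤ => (Pi.single j a : Fin d → ℤ) := by
  intro m hm
  have haxis : ∀ i, i ≠ j → m i = 0 := by
    by_contra hne
    exact hm (if_neg hne)
  refine ⟨m j, funext fun i => ?_⟩
  rcases eq_or_ne i j with rfl | hi
  · exact Pi.single_eq_same i _
  · rw [haxis i hi]
    exact Pi.single_eq_of_ne hi _

/-- The operator `i ∂ⱼ` on `ℓ²(ℤ^d)`. -/
def partialDeriv (j : Fin d) : ℓ²(Fin d → ℤ, ℂ) →L[ℝ] ℓ²(Fin d → ℤ, ℂ) :=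
  latticeDeriv (Pi.single j 1)

lemma pd_coe_apply (j : Fin d) (f : ℓ²(Fin d → ℤ, ℂ)) (k : Fin d → ℤ) :
    pd j f k = -Complex.I * partialDeriv j f k := by
  have hinj : Function.Injective fun a : ℤ => (Pi.single j a : Fin d → ℤ) :=
    Pi.single_injective (M := fun _ : Fin d => ℤ) j
  calc pd j f k = ∑' m, f (k - m) * phi d j m := by
        rw [pd, dconv, ← (Equiv.subLeft k).tsum_eq]
        simp only [Equiv.subLeft_apply, sub_sub_cancel]
    _ = ∑' a : ℤ, f (k - Pi.single j a) * phi d j (Pi.single j a) :=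
        (hinj.tsum_eq ((Function.support_mul_subset_right _ _).trans (support_phi_subset j))).symm
    _ = ∑' a : ℤ, -Complex.I * psi a • f (k - a • Pi.single j (1 : ℤ)) :=
        tsum_congr fun a => by
          rw [phi_single, ← Pi.single_smul, smul_eq_mul, mul_one, Complex.real_smul]
          ring
    _ = -Complex.I * partialDeriv j f k := by
        rw [tsum_mul_left, partialDeriv, (hasSum_latticeDeriv_apply (Pi.single j 1) f k).tsum_eq]

lemma norm_pd_coe_apply (j : Fin d) (f : ℓ²(Fin d → ℤ, ℂ)) (k : Fin d → ℤ) :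
    ‖pd j f k‖ = ‖partialDeriv j f k‖ := by
  rw [pd_coe_apply, norm_mul, norm_neg, Complex.norm_I, one_mul]

/-- The operator `-Δ = ∑ⱼ ∂ⱼ* ∂ⱼ` on `ℓ²(ℤ^d)`. -/
def negLaplacian : ℓ²(Fin d → ℤ, ℂ) →L[ℝ] ℓ²(Fin d → ℤ, ℂ) :=
  ∑ j, star (partialDeriv j) * partialDeriv j

lemma negLaplacian_apply (f : ℓ²(Fin d → ℤ, ℂ)) (m : Fin d → ℤ) :
    negLaplacian f m = -lap f m := by
  simp only [negLaplacian, partialDeriv, star_latticeDeriv_mul_self, sum_apply, lp.coeFn_sum,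
    Finset.sum_apply, lap, ← Finset.sum_neg_distrib]
  refine Finset.sum_congr rfl fun j _ => ?_
  rw [sub_apply, sub_apply, lp.coeFn_sub, lp.coeFn_sub,
    Pi.sub_apply, Pi.sub_apply, translation_apply, translation_apply, sub_neg_eq_add]
  simp only [smul_apply, one_apply_eq_self, lp.coeFn_smul, Pi.smul_apply, Complex.real_smul,
    Complex.ofReal_ofNat]
  ring

end Lattice

section Gradient

variable {H : Type*} [NormedAddCommGroup H] [InnerProductSpace ℝ H] [CompleteSpace H]

-- Subtracting the subgradient inequalities at `x` and `y` squeezes the Taylor remainder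
-- between `0` and `⟪G y - G x, y - x⟫`.
lemma hasGradientAt_of_subgradient_of_continuousAt {F : H → ℝ} {G : H → H} {x : H}
    (hG : ∀ y z, F y + ⟪G y, z - y⟫_ℝ ≤ F z) (hcont : ContinuousAt G x) :
    HasGradientAt F (G x) x := by
  have hbound (y : H) : ‖F y - F x - ⟪G x, y - x⟫_ℝ‖ ≤ ‖G y - G x‖ * ‖y - x‖ := by
    have hlower := hG x y
    have hupper := hG y x
    have hcs := real_inner_le_norm (G y - G x) (y - x)
    rw [← neg_sub y x, inner_neg_right] at hupper
    rw [inner_sub_left] at hcs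
    rw [Real.norm_of_nonneg] <;> linarith
  have hlittle : (fun y => G y - G x) =o[𝓝 x] fun _ => (1 : ℝ) :=
    (Asymptotics.isLittleO_one_iff ℝ).2 (tendsto_sub_nhds_zero_iff.2 hcont)
  rw [hasGradientAt_iff_isLittleO]
  refine (Asymptotics.IsBigO.of_bound' (.of_forall fun y => ?_)).trans_isLittleO
    ((hlittle.norm_left.mul_isBigO (Asymptotics.isBigO_refl (fun y => ‖y - x‖) _)).trans_isBigO
      (by simpa only [one_mul] using (Asymptotics.isBigO_refl _ _).norm_left))
  rw [norm_mul, norm_norm, norm_norm]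
  exact hbound y

lemma hasGradientAt_half_norm_sq_apply (B : H →L[ℝ] H) (x : H) :
    HasGradientAt (fun y => ‖B y‖ ^ 2 / 2) ((star B * B) x) x := by
  rw [hasGradientAt_iff_hasFDerivAt]
  convert! (B.hasFDerivAt (x := x)).norm_sq.mul_const (1 / 2) using 1
  · ext; ring
  · ext y
    simp [ContinuousLinearMap.star_eq_adjoint, ContinuousLinearMap.adjoint_inner_left]

end Gradient

section Newton

variable {H : Type*} [NormedAddCommGroup H] [InnerProductSpace ℝ H] [CompleteSpace H]

lemma norm_sq_div_two_add_eq_of_hasGradientAt_neg {Φ : H → ℝ} {S : Set ℝ} (hS : Convex ℝ S)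
    {x v a : ℝ → H} (hx : ∀ t ∈ S, HasDerivWithinAt x (v t) S t)
    (hv : ∀ t ∈ S, HasDerivWithinAt v (a t) S t)
    (hΦ : ∀ t ∈ S, HasGradientAt Φ (-a t) (x t)) {s t : ℝ} (hs : s ∈ S) (ht : t ∈ S) :
    ‖v t‖ ^ 2 / 2 + Φ (x t) = ‖v s‖ ^ 2 / 2 + Φ (x s) := by
  have hderiv : ∀ r ∈ S, HasDerivWithinAt (fun r => ‖v r‖ ^ 2 / 2 + Φ (x r)) 0 S r := by
    intro r hr
    convert! ((hv r hr).norm_sq.div_const 2).add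
      ((hΦ r hr).hasFDerivAt.comp_hasDerivWithinAt r (hx r hr)) using 1
    simp [real_inner_comm]
  have hbound := hS.norm_image_sub_le_of_norm_hasDerivWithin_le hderiv
    (fun _ _ => norm_zero.le) hs ht
  rw [zero_mul] at hbound
  exact sub_eq_zero.1 (norm_le_zero_iff.1 hbound)

end Newton

section Nonlinearity

lemma rpow_add_mul_sub_le_rpow {q x y : ℝ} (hq : 1 ≤ q) (hx : 0 ≤ x) (hy : 0 ≤ y) :
    x ^ q + q * x ^ (q - 1) * (y - x) ≤ y ^ q := by
  rcases hx.eq_or_lt with rfl | hx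
  · rcases hq.eq_or_lt with rfl | hq
    · simp
    · simpa [Real.zero_rpow (by linarith : q ≠ 0), Real.zero_rpow (by linarith : q - 1 ≠ 0)]
        using Real.rpow_nonneg hy q
  · have hbernoulli := one_add_mul_self_le_rpow_one_add (s := y / x - 1)
      (by linarith [div_nonneg hy hx.le]) hq
    rw [add_sub_cancel, Real.div_rpow hy hx.le, le_div_iff₀ (Real.rpow_pos_of_pos hx q)]
      at hbernoulli
    refine le_of_eq_of_le ?_ hbernoulli
    rw [Real.rpow_sub_one hx.ne']
    field_simp

/-- The power nonlinearity `x ↦ |x|^{p-1} x`. -/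
def normRpowSMul {E : Type*} [Norm E] [SMul ℝ E] (p : ℝ) (x : E) : E := ‖x‖ ^ (p - 1) • x

lemma norm_rpow_add_inner_normRpowSMul_le {E : Type*} [NormedAddCommGroup E]
    [InnerProductSpace ℝ E] {p : ℝ} (hp : 0 ≤ p) (x y : E) :
    ‖x‖ ^ (p + 1) + (p + 1) * ⟪normRpowSMul p x, y - x⟫_ℝ ≤ ‖y‖ ^ (p + 1) := by
  have hxx : ‖x‖ ^ (p - 1) * ‖x‖ ^ 2 = ‖x‖ ^ p * ‖x‖ := by
    rcases eq_or_ne x 0 with rfl | hx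
    · simp
    · rw [Real.rpow_sub_one (norm_ne_zero_iff.2 hx)]
      field
  have hxy : ‖x‖ ^ (p - 1) * ⟪x, y⟫_ℝ ≤ ‖x‖ ^ p * ‖y‖ := by
    rcases eq_or_ne x 0 with rfl | hx
    · simpa using by positivity
    · calc ‖x‖ ^ (p - 1) * ⟪x, y⟫_ℝ ≤ ‖x‖ ^ (p - 1) * (‖x‖ * ‖y‖) := by
            gcongr
            exact real_inner_le_norm x y
        _ = ‖x‖ ^ p * ‖y‖ := by
            rw [Real.rpow_sub_one (norm_ne_zero_iff.2 hx)]
            field [norm_ne_zero_iff.2 hx]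
  have hinner : ⟪normRpowSMul p x, y - x⟫_ℝ ≤ ‖x‖ ^ p * (‖y‖ - ‖x‖) := by
    rw [normRpowSMul, real_inner_smul_left, inner_sub_right, real_inner_self_eq_norm_sq]
    linarith
  have htangent := rpow_add_mul_sub_le_rpow (by linarith : 1 ≤ p + 1) (norm_nonneg x)
    (norm_nonneg y)
  rw [add_sub_cancel_right] at htangent
  nlinarith

variable {E : Type*} [NormedAddCommGroup E] [NormedSpace ℝ E] {p R : ℝ}

lemma norm_normRpowSMul_sub_le_of_norm_le {a b : E} (hp : 1 ≤ p) (ha : ‖a‖ ≤ R) (hab : ‖b‖ ≤ ‖a‖) :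
    ‖normRpowSMul p a - normRpowSMul p b‖ ≤ (p + 1) * R ^ (p - 1) * ‖a - b‖ := by
  have hR : 0 ≤ R := (norm_nonneg a).trans ha
  have hmono : ‖b‖ ^ (p - 1) ≤ ‖a‖ ^ (p - 1) := by gcongr
  have hmonoR : ‖a‖ ^ (p - 1) ≤ R ^ (p - 1) := by gcongr
  have hrpow (x : E) : ‖x‖ ^ (p - 1) * ‖x‖ = ‖x‖ ^ p := by
    rw [← Real.rpow_add_one' (norm_nonneg x) (by linarith), sub_add_cancel]
  have hcoeff : (‖a‖ ^ (p - 1) - ‖b‖ ^ (p - 1)) * ‖a‖ ≤ p * R ^ (p - 1) * ‖a - b‖ := calc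
    (‖a‖ ^ (p - 1) - ‖b‖ ^ (p - 1)) * ‖a‖
      ≤ ‖a‖ ^ (p - 1) * ‖a‖ - ‖b‖ ^ (p - 1) * ‖b‖ := by
        rw [sub_mul]
        gcongr
    _ ≤ p * ‖a‖ ^ (p - 1) * (‖a‖ - ‖b‖) := by
        rw [hrpow, hrpow]
        linarith [rpow_add_mul_sub_le_rpow hp (norm_nonneg a) (norm_nonneg b)]
    _ ≤ p * R ^ (p - 1) * ‖a - b‖ := by
        gcongr
        exact norm_sub_norm_le a b
  calc ‖normRpowSMul p a - normRpowSMul p b‖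
      = ‖‖b‖ ^ (p - 1) • (a - b) + (‖a‖ ^ (p - 1) - ‖b‖ ^ (p - 1)) • a‖ := by
        rw [normRpowSMul, normRpowSMul]
        congr 1
        module
    _ ≤ ‖b‖ ^ (p - 1) * ‖a - b‖ + (‖a‖ ^ (p - 1) - ‖b‖ ^ (p - 1)) * ‖a‖ := by
        refine (norm_add_le _ _).trans_eq ?_
        rw [norm_smul, norm_smul, Real.norm_of_nonneg (by positivity),
          Real.norm_of_nonneg (sub_nonneg.2 hmono)]
    _ ≤ R ^ (p - 1) * ‖a - b‖ + p * R ^ (p - 1) * ‖a - b‖ := by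
        gcongr
        exact hab.trans ha
    _ = (p + 1) * R ^ (p - 1) * ‖a - b‖ := by ring

lemma norm_normRpowSMul_sub_le {a b : E} (hp : 1 ≤ p) (ha : ‖a‖ ≤ R) (hb : ‖b‖ ≤ R) :
    ‖normRpowSMul p a - normRpowSMul p b‖ ≤ (p + 1) * R ^ (p - 1) * ‖a - b‖ := by
  rcases le_total ‖b‖ ‖a‖ with h | h
  · exact norm_normRpowSMul_sub_le_of_norm_le hp ha h
  · rw [norm_sub_rev, norm_sub_rev a]
    exact norm_normRpowSMul_sub_le_of_norm_le hp hb h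

end Nonlinearity

section PowerSum

variable {ι E : Type*} [NormedAddCommGroup E] {p : ℝ}

lemma norm_normRpowSMul_apply_le [NormedSpace ℝ E] (hp : 1 ≤ p) (f : ℓ²(ι, E)) (i : ι) :
    ‖normRpowSMul p (f i)‖ ≤ ‖‖f‖ ^ (p - 1) • f i‖ := by
  rw [normRpowSMul, norm_smul, norm_smul, Real.norm_of_nonneg (by positivity),
    Real.norm_of_nonneg (by positivity)]
  gcongr
  exact lp.norm_apply_le_norm two_ne_zero f i

/-- The power nonlinearity `f ↦ |f|^{p-1} f` acting pointwise on `ℓ²`. -/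
def lpNormRpowSMul [NormedSpace ℝ E] (hp : 1 ≤ p) (f : ℓ²(ι, E)) : ℓ²(ι, E) :=
  ⟨fun i => normRpowSMul p (f i),
    (lp.memℓp (‖f‖ ^ (p - 1) • f)).mono' (norm_normRpowSMul_apply_le hp f)⟩

@[simp] lemma lpNormRpowSMul_apply [NormedSpace ℝ E] (hp : 1 ≤ p) (f : ℓ²(ι, E)) (i : ι) :
    lpNormRpowSMul hp f i = normRpowSMul p (f i) :=
  rfl

lemma continuous_lpNormRpowSMul [NormedSpace ℝ E] (hp : 1 ≤ p) :
    Continuous (lpNormRpowSMul hp : ℓ²(ι, E) → ℓ²(ι, E)) := by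
  refine continuous_iff_continuousAt.2 fun f => continuousAt_of_locally_lipschitz one_pos
    ((p + 1) * (‖f‖ + 1) ^ (p - 1)) fun g hg => ?_
  rw [dist_eq_norm] at hg
  have hg_norm : ‖g‖ ≤ ‖f‖ + 1 := by linarith [norm_le_norm_add_norm_sub' g f]
  rw [dist_eq_norm, dist_eq_norm]
  calc ‖lpNormRpowSMul hp g - lpNormRpowSMul hp f‖
      ≤ ‖((p + 1) * (‖f‖ + 1) ^ (p - 1)) • (g - f)‖ := by
        refine lp.norm_mono two_ne_zero fun i => ?_
        rw [lp.coeFn_smul, Pi.smul_apply, norm_smul, Real.norm_of_nonneg (by positivity)]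
        exact norm_normRpowSMul_sub_le hp ((lp.norm_apply_le_norm two_ne_zero g i).trans hg_norm)
          ((lp.norm_apply_le_norm two_ne_zero f i).trans (by linarith))
    _ = (p + 1) * (‖f‖ + 1) ^ (p - 1) * ‖g - f‖ := by
        rw [norm_smul, Real.norm_of_nonneg (by positivity)]

lemma summable_norm_rpow_add_one (hp : 1 ≤ p) (f : ℓ²(ι, E)) :
    Summable fun i => ‖f i‖ ^ (p + 1) := by
  refine ((hasSum_norm_sq f).summable.mul_left (‖f‖ ^ (p - 1))).of_nonneg_of_le
    (fun i => by positivity) fun i => ?_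
  calc ‖f i‖ ^ (p + 1) = ‖f i‖ ^ (p - 1) * ‖f i‖ ^ 2 := by
        rw [← Real.rpow_add_natCast' (norm_nonneg _) (by push_cast; linarith)]
        push_cast
        ring_nf
    _ ≤ ‖f‖ ^ (p - 1) * ‖f i‖ ^ 2 := by
        gcongr
        exact lp.norm_apply_le_norm two_ne_zero f i

lemma hasGradientAt_tsum_norm_rpow [InnerProductSpace ℝ E] [CompleteSpace E] (hp : 1 ≤ p)
    (f : ℓ²(ι, E)) :
    HasGradientAt (fun g : ℓ²(ι, E) => ∑' i, ‖g i‖ ^ (p + 1))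
      ((p + 1) • lpNormRpowSMul hp f) f := by
  refine hasGradientAt_of_subgradient_of_continuousAt
    (G := fun g => (p + 1) • lpNormRpowSMul hp g) (fun g h => ?_)
    ((continuous_lpNormRpowSMul hp).const_smul (p + 1)).continuousAt
  rw [real_inner_smul_left]
  refine hasSum_le (fun i => norm_rpow_add_inner_normRpowSMul_le (by linarith) (g i) (h i))
    ((summable_norm_rpow_add_one hp g).hasSum.add
      ((lp.hasSum_inner (𝕜 := ℝ) (lpNormRpowSMul hp g) (h - g)).mul_left (p + 1)))
    (summable_norm_rpow_add_one hp h).hasSum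

end PowerSum

section Curves

variable {d : ℕ}

lemma w2_zero_eq (f : (Fin d → ℤ) → ℂ) :
    w2 0 f = (∑' m, ((‖f m‖₊ ^ 2 : ℝ≥0) : ℝ≥0∞)) ^ (1 / 2 : ℝ) := by
  simp [w2, lpn]

lemma w2_zero_coe (f : ℓ²(Fin d → ℤ, ℂ)) : w2 0 f = ‖f‖ₑ := by
  have hsum : HasSum (fun m => ‖f m‖₊ ^ 2) (‖f‖₊ ^ 2) := by
    rw [← NNReal.hasSum_coe]
    simpa using hasSum_norm_sq f
  rw [w2_zero_eq, (ENNReal.hasSum_coe.2 hsum).tsum_eq, ENNReal.coe_pow, ← ENNReal.rpow_natCast,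
    ← ENNReal.rpow_mul]
  simp [enorm]

lemma memℓp_of_w2_zero_lt_top {f : (Fin d → ℤ) → ℂ} (h : w2 0 f < ⊤) : Memℓp f 2 := by
  rw [w2_zero_eq, ENNReal.rpow_lt_top_iff_of_pos (by norm_num)] at h
  rw [memℓp_gen_iff (by norm_num)]
  simpa using NNReal.summable_coe.2 (ENNReal.tsum_coe_ne_top_iff_summable.1 h.ne)

lemma hasDerivWithinAt_toL2 {S : Set ℝ} {f f' : ℝ → (Fin d → ℤ) → ℂ}
    (hf : ∀ t ∈ S, w2 0 (f t) < ⊤) (hf' : ∀ t ∈ S, w2 0 (f' t) < ⊤) (h : DerivW 0 S f f')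
    {t : ℝ} (ht : t ∈ S) :
    HasDerivWithinAt (fun s => toL2 (f s)) (toL2 (f' t)) S t := by
  rw [hasDerivWithinAt_iff_tendsto_slope, tendsto_iff_edist_tendsto_0]
  refine (h t ht).congr' ?_
  filter_upwards [self_mem_nhdsWithin] with s hs
  rw [edist_eq_enorm_sub, ← w2_zero_coe, lp.coeFn_sub, slope_def_module, lp.coeFn_smul,
    lp.coeFn_sub, coe_toL2 (memℓp_of_w2_zero_lt_top (hf s hs.1)),
    coe_toL2 (memℓp_of_w2_zero_lt_top (hf t ht)), coe_toL2 (memℓp_of_w2_zero_lt_top (hf' t ht))]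
  rfl

end Curves

section Energy

variable {d : ℕ}

/-- The potential energy `½ ∑ⱼ ‖∂ⱼf‖² - μ/(p+1) ∑ₘ |f(m)|^{p+1}` on `ℓ²(ℤ^d)`. -/
def potential (p μ : ℝ) (f : ℓ²(Fin d → ℤ, ℂ)) : ℝ :=
  ∑ j, ‖partialDeriv j f‖ ^ 2 / 2 - μ / (p + 1) * ∑' m, ‖f m‖ ^ (p + 1)

lemma hasGradientAt_potential {p : ℝ} (hp : 1 ≤ p) (μ : ℝ) (f : ℓ²(Fin d → ℤ, ℂ)) :
    HasGradientAt (potential p μ)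
      (negLaplacian f - μ • lpNormRpowSMul hp f) f := by
  have hquad (j : Fin d) := (hasGradientAt_half_norm_sq_apply (partialDeriv j) f).hasFDerivAt
  have hpow := (hasGradientAt_tsum_norm_rpow hp f).hasFDerivAt.const_mul (μ / (p + 1))
  rw [hasGradientAt_iff_hasFDerivAt]
  convert! (HasFDerivAt.fun_sum fun j _ => hquad j).sub hpow using 1
  rw [negLaplacian, sum_apply, map_sub, map_sum, map_smul, map_smul, smul_smul,
    div_mul_cancel₀ _ (by linarith)]

/-- The energy of the state `(u, ∂ₜu) = (f, g)`. -/
def energy (p μ : ℝ) (f g : (Fin d → ℤ) → ℂ) : ℝ :=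
  (1 / 2 : ℝ) * ∑' m, (‖g m‖ ^ 2 + ∑ j, ‖pd j f m‖ ^ 2 - 2 * μ * ‖f m‖ ^ (p + 1) / (p + 1))

lemma energy_coe {p : ℝ} (hp : 1 ≤ p) (μ : ℝ) (f g : ℓ²(Fin d → ℤ, ℂ)) :
    energy p μ f g = ‖g‖ ^ 2 / 2 + potential p μ f := by
  have hdensity := ((hasSum_norm_sq g).add (hasSum_sum (s := Finset.univ) fun j _ =>
    hasSum_norm_sq (partialDeriv j f))).sub
      (((summable_norm_rpow_add_one hp f).hasSum.mul_left (2 * μ)).div_const (p + 1))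
  simp only [energy, norm_pd_coe_apply, hdensity.tsum_eq, potential, ← Finset.sum_div]
  ring

theorem stmt8_general {d : ℕ} {p : ℝ} (hp : 1 ≤ p) (μ : ℝ) {S : Set ℝ} (hS : Convex ℝ S)
    {u u1 u2 : ℝ → (Fin d → ℤ) → ℂ} (hu : IsC2 0 S u u1 u2)
    (heq : ∀ t ∈ S, ∀ x,
      u2 t x - lap (u t) x = (μ : ℂ) * ((‖u t x‖ ^ (p - 1) : ℝ) : ℂ) * u t x)
    {s t : ℝ} (hs : s ∈ S) (ht : t ∈ S) :
    energy p μ (u t) (u1 t) = energy p μ (u s) (u1 s) := by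
  have hu0 {r : ℝ} (hr : r ∈ S) := coe_toL2 (memℓp_of_w2_zero_lt_top (hu.mem0 r hr))
  have hu1 {r : ℝ} (hr : r ∈ S) := coe_toL2 (memℓp_of_w2_zero_lt_top (hu.mem1 r hr))
  have hu2 {r : ℝ} (hr : r ∈ S) := coe_toL2 (memℓp_of_w2_zero_lt_top (hu.mem2 r hr))
  have hnewton : ∀ r ∈ S, HasGradientAt (potential p μ) (-toL2 (u2 r)) (toL2 (u r)) := by
    intro r hr
    convert! hasGradientAt_potential hp μ (toL2 (u r)) using 1
    ext x
    rw [lp.coeFn_neg, lp.coeFn_sub, lp.coeFn_smul, Pi.neg_apply, Pi.sub_apply, Pi.smul_apply,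
      negLaplacian_apply, lpNormRpowSMul_apply, hu2 hr, hu0 hr,
      normRpowSMul, Complex.real_smul, Complex.real_smul]
    linear_combination -heq r hr x
  rw [← hu0 hs, ← hu0 ht, ← hu1 hs, ← hu1 ht, energy_coe hp, energy_coe hp]
  exact norm_sq_div_two_add_eq_of_hasGradientAt_neg hS
    (fun _ => hasDerivWithinAt_toL2 hu.mem0 hu.mem1 hu.hder1)
    (fun _ => hasDerivWithinAt_toL2 hu.mem1 hu.mem2 hu.hder2) hnewton hs ht

end Energy

/-- energy conservation for the discrete semilinear wave equation
`∂ₜ²u - Δu = μ|u|^{p-1}u`, `μ = ±1`: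
`E(t) = (1/2)Σ_k(|∂ₜu|² + Σⱼ|∂ⱼu|² - 2μ|u|^{p+1}/(p+1))` is constant on `[0,T]`. -/
theorem stmt8 (d : ℕ) (hd : 0 < d) (p : ℝ) (hp : 1 < p) (μ : ℝ) (hμ : μ = 1 ∨ μ = -1)
    (T : ℝ) (hT : 0 < T) (u u1 u2 : ℝ → (Fin d → ℤ) → ℂ)
    (hu : IsC2 0 (Set.Icc 0 T) u u1 u2)
    (heq : ∀ t ∈ Set.Icc (0 : ℝ) T, ∀ x,
      u2 t x - lap (u t) x = (μ : ℂ) * ((‖u t x‖ ^ (p - 1) : ℝ) : ℂ) * u t x) :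
    ∀ t ∈ Set.Icc (0 : ℝ) T,
      (1 / 2 : ℝ) *
          ∑' m, (‖u1 t m‖ ^ 2 + ∑ j, ‖pd j (u t) m‖ ^ 2 -
            2 * μ * ‖u t m‖ ^ (p + 1) / (p + 1)) =
        (1 / 2 : ℝ) *
          ∑' m, (‖u1 0 m‖ ^ 2 + ∑ j, ‖pd j (u 0) m‖ ^ 2 -
            2 * μ * ‖u 0 m‖ ^ (p + 1) / (p + 1)) := by
  exact fun t ht => stmt8_general hp.le μ (convex_Icc 0 T) hu heq (Set.left_mem_Icc.2 hT.le) ht
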